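/- Let ν, z ∈ ℂ with Re(ν) > 1/2 and Re(z) > 0. Then (1/2)Γ(ν) + 2 Σ_{n=1}^∞ (nz/2)^ν K_ν(nz) = Γ(1/2) Γ(ν+1/2) z^{2ν} ( z^{−(2ν+1)} + 2 Σ_{n=1}^∞ (z² + 4n²π²)^{−(ν+1/2)} ). -/

import Mathlib

open scoped Real

noncomputable def besselK (ν z : ℂ) : ℂ :=
  ∫ t in Set.Ioi (0:ℝ), Complex.exp (-z * Real.cosh t) * Complex.cosh (ν * t)

/-!
Substituting `u = n exp t` in the integral for `K_ν(n z)` shows that `2 n ^ ν K_ν(n z)` is the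
Mellin transform at `ν` of `u ↦ exp (-(z / 2) (u + n² / u))`. For `n = 0` this transform is
`(z / 2) ^ (-ν) Γ(ν)`, so the left-hand side is, up to the factor `(z / 2) ^ ν / 2`, the sum of
these transforms over all integers `n`, that is, the Mellin transform of a theta series. Poisson
summation turns the series into `√(2 π u / z) ∑ exp (-(z / 2 + 2 π² n² / z) u)`. The square root of
`u` moves the Mellin variable to `ν + 1 / 2`, and each term is now a Gamma integral, with rate
`(z² + 4 n² π²) / (2 z)` of positive real part. Gamma integrals of complex rate follow from those of
real rate by the identity theorem.
-/

section

open Complex Set MeasureTheory Filter Topology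
open scoped Nat

lemma mul_cpow_of_re_pos {a b : ℂ} (ha : 0 < a.re) (hb : 0 < b.re) (s : ℂ) :
    (a * b) ^ s = a ^ s * b ^ s := by
  have ha0 : a ≠ 0 := ne_zero_of_re_pos ha
  have hb0 : b ≠ 0 := ne_zero_of_re_pos hb
  have harg_a := abs_lt.1 (abs_arg_lt_pi_div_two_iff.2 (Or.inl ha))
  have harg_b := abs_lt.1 (abs_arg_lt_pi_div_two_iff.2 (Or.inl hb))
  have hlog : log (a * b) = log a + log b :=
    log_mul ha0 hb0 ⟨by linarith, by linarith⟩
  rw [cpow_def_of_ne_zero (mul_ne_zero ha0 hb0), cpow_def_of_ne_zero ha0,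
    cpow_def_of_ne_zero hb0, hlog, add_mul, exp_add]

lemma sq_cpow_of_re_pos {z : ℂ} (hz : 0 < z.re) (s : ℂ) : (z ^ 2) ^ s = z ^ (2 * s) := by
  rw [sq, mul_cpow_of_re_pos hz hz, two_mul, cpow_add _ _ (ne_zero_of_re_pos hz)]

lemma inv_re_pos {z : ℂ} (hz : 0 < z.re) : 0 < (z⁻¹).re := by
  have := normSq_pos.2 (ne_zero_of_re_pos hz)
  rw [inv_re]
  positivity

lemma inv_cpow_of_re_pos {z : ℂ} (hz : 0 < z.re) (s : ℂ) : z⁻¹ ^ s = (z ^ s)⁻¹ := by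
  have harg := abs_lt.1 (abs_arg_lt_pi_div_two_iff.2 (Or.inl hz))
  exact inv_cpow z s (by linarith [Real.pi_pos])

lemma two_pi_div_re_pos {z : ℂ} (hz : 0 < z.re) : 0 < (2 * π / z).re := by
  have := inv_re_pos hz
  rw [div_eq_mul_inv, ← ofReal_ofNat, ← ofReal_mul, re_ofReal_mul]
  positivity

lemma exp_neg_le_factorial_div_pow {y : ℝ} (hy : 0 < y) (k : ℕ) : Real.exp (-y) ≤ k ! / y ^ k := by
  rw [Real.exp_neg, ← inv_div]
  exact inv_anti₀ (by positivity) (Real.pow_div_factorial_le_exp y hy.le k)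

lemma eqOn_re_pos_of_eq_ofReal {F : Type*} [NormedAddCommGroup F] [NormedSpace ℂ F]
    [CompleteSpace F] {f g : ℂ → F} (hf : DifferentiableOn ℂ f {w | 0 < w.re})
    (hg : DifferentiableOn ℂ g {w | 0 < w.re}) (heq : ∀ x : ℝ, 0 < x → f x = g x) :
    EqOn f g {w | 0 < w.re} := by
  have hU : IsOpen {w : ℂ | 0 < w.re} := isOpen_lt continuous_const continuous_re
  have hfreq : ∃ᶠ x : ℝ in 𝓝[≠] 1, f x = g x :=
    (eventually_nhdsWithin_of_eventually_nhds ((lt_mem_nhds one_pos).mono heq)).frequently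
  have htendsto : Tendsto ((↑) : ℝ → ℂ) (𝓝[≠] 1) (𝓝[≠] ((1 : ℝ) : ℂ)) :=
    continuous_ofReal.continuousWithinAt.tendsto_nhdsWithin fun _ _ => by simp_all
  exact (hf.analyticOnNhd hU).eqOn_of_preconnected_of_frequently_eq (hg.analyticOnNhd hU)
    (convex_halfSpace_re_gt 0).isPreconnected (z₀ := ((1 : ℝ) : ℂ)) (by simp)
    (htendsto.frequently hfreq)

lemma tsum_int_eq_zero_add_two_nsmul_tsum_succ {G : Type*} [AddCommGroup G] [UniformSpace G]
    [IsUniformAddGroup G] [CompleteSpace G] [T2Space G] {f : ℤ → G} (heven : f.Even)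
    (hf : Summable f) : ∑' n : ℤ, f n = f 0 + 2 • ∑' n : ℕ, f (n + 1) := by
  rw [tsum_int_eq_zero_add_two_mul_tsum_pnat heven hf,
    tsum_pnat_eq_tsum_succ (f := fun n : ℕ => f n)]
  simp only [Nat.cast_add, Nat.cast_one]

lemma integral_eq_integral_Ioi_add_comp_neg {E : Type*} [NormedAddCommGroup E] [NormedSpace ℝ E]
    {f : ℝ → E} (hf : Integrable f) : ∫ x, f x = ∫ x in Ioi 0, (f x + f (-x)) := by
  rw [integral_add hf.integrableOn hf.comp_neg.integrableOn, integral_comp_neg_Ioi, neg_zero,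
    add_comm, intervalIntegral.integral_Iic_add_Ioi hf.integrableOn hf.integrableOn]

section Mellin

variable {E : Type*} [NormedAddCommGroup E] [NormedSpace ℂ E] {f : ℝ → E} {s : ℂ}

lemma norm_cpow_sub_one_smul {t : ℝ} (ht : 0 < t) (s : ℂ) (x : E) :
    ‖(t : ℂ) ^ (s - 1) • x‖ = t ^ (s.re - 1) * ‖x‖ := by
  rw [norm_smul, norm_cpow_eq_rpow_re_of_pos ht, sub_re, one_re]

lemma abs_exp_smul_cpow_sub_one_smul (s : ℂ) (t : ℝ) (x : E) :
    |Real.exp t| • ((Real.exp t : ℝ) : ℂ) ^ (s - 1) • x = exp (s * t) • x := by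
  have hpow : ((Real.exp t : ℝ) : ℂ) ^ (s - 1) = exp (t * (s - 1)) := by
    rw [cpow_def_of_ne_zero (ofReal_ne_zero.2 (Real.exp_pos t).ne'),
      ← ofReal_log (Real.exp_pos t).le, Real.log_exp]
  rw [abs_of_pos (Real.exp_pos t), hpow, ← coe_smul (Real.exp t), smul_smul, ofReal_exp, ← exp_add]
  ring_nf

lemma mellin_eq_integral_exp (f : ℝ → E) (s : ℂ) :
    mellin f s = ∫ t : ℝ, exp (s * t) • f (Real.exp t) := by
  rw [mellin, ← Real.range_exp, ← image_univ,
    integral_image_eq_integral_abs_deriv_smul .univ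
      (fun t _ => (Real.hasDerivAt_exp t).hasDerivWithinAt) Real.exp_injective.injOn]
  simp only [abs_exp_smul_cpow_sub_one_smul, setIntegral_univ]

lemma mellinConvergent_iff_integrable_exp :
    MellinConvergent f s ↔ Integrable fun t : ℝ => exp (s * t) • f (Real.exp t) := by
  rw [MellinConvergent, ← Real.range_exp, ← image_univ,
    integrableOn_image_iff_integrableOn_abs_deriv_smul .univ
      (fun t _ => (Real.hasDerivAt_exp t).hasDerivWithinAt) Real.exp_injective.injOn]
  simp only [abs_exp_smul_cpow_sub_one_smul, integrableOn_univ]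

lemma integrableOn_rpow_mul_exp_neg_mul {a r : ℝ} (ha : 0 < a) (hr : 0 < r) :
    IntegrableOn (fun t : ℝ => t ^ (a - 1) * Real.exp (-(r * t))) (Ioi 0) := by
  simpa using integrableOn_rpow_mul_exp_neg_mul_rpow (p := 1) (s := a - 1) (b := r)
    (by linarith) one_pos hr

lemma hasSum_mellin_of_summable_integral_norm {ι : Type*} [Countable ι] {F : ι → ℝ → E}
    (hF : ∀ i, MellinConvergent (F i) s)
    (hsum : Summable fun i => ∫ t : ℝ in Ioi 0, ‖(t : ℂ) ^ (s - 1) • F i t‖) :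
    HasSum (fun i => mellin (F i) s) (mellin (fun t => ∑' i, F i t) s) := by
  simpa only [mellin, tsum_const_smul''] using hasSum_integral_of_summable_integral_norm hF hsum

section Domination

variable {C c k : ℝ}

lemma norm_cpow_sub_one_smul_le {t : ℝ} (ht : 0 < t)
    (hle : ‖f t‖ ≤ C * (t ^ k * Real.exp (-(c * t)))) :
    ‖(t : ℂ) ^ (s - 1) • f t‖ ≤ C * (t ^ (s.re + k - 1) * Real.exp (-(c * t))) := by
  calc ‖(t : ℂ) ^ (s - 1) • f t‖
      ≤ t ^ (s.re - 1) * (C * (t ^ k * Real.exp (-(c * t)))) := by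
        rw [norm_cpow_sub_one_smul ht]
        gcongr
    _ = C * (t ^ (s.re + k - 1) * Real.exp (-(c * t))) := by
        rw [add_sub_right_comm, Real.rpow_add ht]
        ring

lemma mellinConvergent_of_norm_le (hc : 0 < c) (hs : 0 < s.re + k)
    (hf : ContinuousOn f (Ioi 0))
    (hle : ∀ t, 0 < t → ‖f t‖ ≤ C * (t ^ k * Real.exp (-(c * t)))) :
    MellinConvergent f s := by
  refine ((integrableOn_rpow_mul_exp_neg_mul hs hc).const_mul C).mono' ?_ ?_
  · refine ContinuousOn.aestronglyMeasurable (.smul (fun t ht => ?_) hf) measurableSet_Ioi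
    exact (continuousAt_ofReal_cpow_const t _ (Or.inr (ne_of_gt ht))).continuousWithinAt
  · filter_upwards [ae_restrict_mem measurableSet_Ioi] with t ht
    exact norm_cpow_sub_one_smul_le ht (hle t ht)

lemma integral_norm_cpow_sub_one_smul_le (hc : 0 < c) (hs : 0 < s.re + k)
    (hle : ∀ t, 0 < t → ‖f t‖ ≤ C * (t ^ k * Real.exp (-(c * t)))) :
    ∫ t : ℝ in Ioi 0, ‖(t : ℂ) ^ (s - 1) • f t‖ ≤
      C * ((1 / c) ^ (s.re + k) * Real.Gamma (s.re + k)) := by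
  rw [← Real.integral_rpow_mul_exp_neg_mul_Ioi hs hc, ← integral_const_mul]
  refine integral_mono_of_nonneg (.of_forall fun _ => norm_nonneg _)
    ((integrableOn_rpow_mul_exp_neg_mul hs hc).const_mul C) ?_
  filter_upwards [ae_restrict_mem measurableSet_Ioi] with t ht
  exact norm_cpow_sub_one_smul_le ht (hle t ht)

end Domination

end Mellin

section Gamma

variable {a r : ℂ}

lemma norm_exp_neg_mul_ofReal (r : ℂ) (t : ℝ) : ‖exp (-(r * t))‖ = Real.exp (-(r.re * t)) := by
  rw [norm_exp, neg_re, re_mul_ofReal]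

lemma mellinConvergent_exp_neg_mul (ha : 0 < a.re) (hr : 0 < r.re) :
    MellinConvergent (fun t : ℝ => exp (-(r * t))) a :=
  mellinConvergent_of_norm_le (C := 1) (k := 0) hr (by simpa using ha) (by fun_prop)
    fun t _ => by simp [norm_exp_neg_mul_ofReal]

lemma hasDerivAt_mellin_exp_neg_mul (ha : 0 < a.re) (hr : 0 < r.re) :
    HasDerivAt (fun w : ℂ => mellin (fun t : ℝ => exp (-(w * t))) a)
      (-mellin (fun t : ℝ => exp (-(r * t))) (a + 1)) r := by
  have hs : {w : ℂ | r.re / 2 < w.re} ∈ 𝓝 r :=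
    (isOpen_lt continuous_const continuous_re).mem_nhds (half_lt_self hr)
  have ha1 : 0 < (a + 1).re := by rw [add_re, one_re]; positivity
  have hderiv := (hasDerivAt_integral_of_dominated_loc_of_deriv_le
    (μ := volume.restrict (Ioi 0))
    (F := fun (w : ℂ) (t : ℝ) => (t : ℂ) ^ (a - 1) • exp (-(w * t)))
    (F' := fun (w : ℂ) (t : ℝ) => -((t : ℂ) ^ (a + 1 - 1) • exp (-(w * t))))
    (bound := fun t : ℝ => t ^ ((a + 1).re - 1) * Real.exp (-(r.re / 2 * t)))
    hs ?_ (mellinConvergent_exp_neg_mul ha hr) (mellinConvergent_exp_neg_mul ha1 hr).neg.1 ?_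
    (integrableOn_rpow_mul_exp_neg_mul ha1 (half_pos hr)) ?_).2
  · simpa only [mellin, integral_neg] using hderiv
  · filter_upwards [(isOpen_lt continuous_const continuous_re).mem_nhds hr] with w hw
    exact (mellinConvergent_exp_neg_mul ha hw).1
  · filter_upwards [ae_restrict_mem measurableSet_Ioi] with t ht w (hw : r.re / 2 < w.re)
    have ht' : 0 < t := ht
    rw [norm_neg, norm_cpow_sub_one_smul ht, norm_exp_neg_mul_ofReal]
    gcongr
  · filter_upwards [ae_restrict_mem measurableSet_Ioi] with t ht w _
    have hexp : HasDerivAt (fun w : ℂ => -(w * t)) (-(t : ℂ)) w := by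
      simpa using ((hasDerivAt_id' w).mul_const (t : ℂ)).fun_neg
    have hcpow : (t : ℂ) ^ (a + 1 - 1) = (t : ℂ) ^ (a - 1) * t := by
      rw [add_sub_right_comm, cpow_add _ _ (ofReal_ne_zero.2 (ne_of_gt ht)), cpow_one]
    refine (hexp.cexp.const_mul ((t : ℂ) ^ (a - 1))).congr_deriv ?_
    rw [hcpow, smul_eq_mul]
    ring

lemma mellin_exp_neg_mul (ha : 0 < a.re) (hr : 0 < r.re) :
    mellin (fun t : ℝ => exp (-(r * t))) a = r ^ (-a) * Gamma a := by
  refine eqOn_re_pos_of_eq_ofReal (f := fun w => mellin (fun t : ℝ => exp (-(w * t))) a)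
    (g := fun w => w ^ (-a) * Gamma a) (fun w hw => ?_) (fun w hw => ?_) (fun x hx => ?_) hr
  · exact (hasDerivAt_mellin_exp_neg_mul ha hw).differentiableAt.differentiableWithinAt
  · exact ((differentiableAt_id.cpow_const (Or.inl hw)).mul_const _).differentiableWithinAt
  · simp only [mellin, smul_eq_mul]
    rw [integral_cpow_mul_exp_neg_mul_Ioi ha hx, one_div, cpow_neg,
      inv_cpow_ofReal_nonneg hx.le]

end Gamma

section BesselKernel

/-- The kernel `u ↦ exp (-(z / 2) (u + m² / u))`, whose Mellin transform at `ν` is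
`2 m ^ ν K_ν(m z)` for `0 < m`; for `m = 0` it is a plain exponential. -/
noncomputable def besselKernel (z : ℂ) (m u : ℝ) : ℂ :=
  exp (-(z / 2 * (u + m ^ 2 / u)))

variable {ν z : ℂ} {m u : ℝ}

lemma besselKernel_zero (z : ℂ) : besselKernel z 0 = fun u : ℝ => exp (-(z / 2 * u)) := by
  ext u
  simp [besselKernel]

lemma besselKernel_neg (z : ℂ) (m : ℝ) : besselKernel z (-m) = besselKernel z m := by
  ext u
  simp only [besselKernel, ofReal_neg, neg_sq]

lemma besselKernel_mul_left (z : ℂ) (m u : ℝ) :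
    besselKernel z m (m * u) = besselKernel (m * z) 1 u := by
  rw [besselKernel, besselKernel]
  push_cast
  congr 2
  field_simp

lemma besselKernel_one_exp (z : ℂ) (t : ℝ) :
    besselKernel z 1 (Real.exp t) = exp (-z * Real.cosh t) := by
  rw [besselKernel, ofReal_cosh, Complex.cosh, exp_neg t, ofReal_exp]
  push_cast
  ring_nf

lemma continuousOn_besselKernel (z : ℂ) (m : ℝ) : ContinuousOn (besselKernel z m) (Ioi 0) := by
  have hdiv : ContinuousOn (fun u : ℝ => (m : ℂ) ^ 2 / u) (Ioi 0) :=
    continuousOn_const.div (by fun_prop) fun u hu => ofReal_ne_zero.2 (ne_of_gt hu)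
  unfold besselKernel
  fun_prop

lemma norm_besselKernel (z : ℂ) (m u : ℝ) :
    ‖besselKernel z m u‖ = Real.exp (-(z.re / 2 * m ^ 2 / u)) * Real.exp (-(z.re / 2 * u)) := by
  have hcast : (u + m ^ 2 / u : ℂ) = ((u + m ^ 2 / u : ℝ) : ℂ) := by push_cast; rfl
  rw [besselKernel, norm_exp, hcast, neg_re, re_mul_ofReal, div_ofNat_re, ← Real.exp_add]
  ring_nf

-- The decay at `0`, to every order `k`, comes from `exp (-y) ≤ k! / y ^ k` at `y = Re z m² / 2u`.
lemma norm_besselKernel_le (hz : 0 < z.re) (hm : m ≠ 0) (k : ℕ) (hu : 0 < u) :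
    ‖besselKernel z m u‖ ≤
      k ! / (z.re / 2 * m ^ 2) ^ k * (u ^ (k : ℝ) * Real.exp (-(z.re / 2 * u))) := by
  calc ‖besselKernel z m u‖
      ≤ k ! / (z.re / 2 * m ^ 2 / u) ^ k * Real.exp (-(z.re / 2 * u)) := by
        rw [norm_besselKernel]
        gcongr
        exact exp_neg_le_factorial_div_pow (by positivity) k
    _ = k ! / (z.re / 2 * m ^ 2) ^ k * (u ^ (k : ℝ) * Real.exp (-(z.re / 2 * u))) := by
        rw [Real.rpow_natCast, div_pow, div_div_eq_mul_div]
        ring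

lemma mellinConvergent_besselKernel (hz : 0 < z.re) (hm : m ≠ 0) (ν : ℂ) :
    MellinConvergent (besselKernel z m) ν := by
  obtain ⟨k, hk⟩ := exists_nat_gt (-ν.re)
  exact mellinConvergent_of_norm_le (half_pos hz) (by linarith) (continuousOn_besselKernel z m)
    fun u hu => norm_besselKernel_le hz hm k hu

lemma mellin_besselKernel_one (hz : 0 < z.re) (ν : ℂ) :
    mellin (besselKernel z 1) ν = 2 * besselK ν z := by
  have hint := mellinConvergent_iff_integrable_exp.1
    (mellinConvergent_besselKernel hz one_ne_zero ν)
  rw [mellin_eq_integral_exp, integral_eq_integral_Ioi_add_comp_neg hint, besselK,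
    ← integral_const_mul]
  refine setIntegral_congr_fun measurableSet_Ioi fun t _ => ?_
  simp only [besselKernel_one_exp, Real.cosh_neg, Complex.cosh, smul_eq_mul, ofReal_neg, mul_neg]
  ring

lemma mellin_besselKernel (hz : 0 < z.re) (hm : 0 < m) (ν : ℂ) :
    mellin (besselKernel z m) ν = 2 * (m ^ ν * besselK ν (m * z)) := by
  have hmz : 0 < (m * z).re := by rw [re_ofReal_mul]; positivity
  have hm0 : (m : ℂ) ^ ν ≠ 0 := cpow_ne_zero_iff.2 (Or.inl (ofReal_ne_zero.2 hm.ne'))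
  have hscale := mellin_comp_mul_left (besselKernel z m) ν hm
  simp only [besselKernel_mul_left z m, mellin_besselKernel_one hmz, cpow_neg,
    smul_eq_mul] at hscale
  rw [mul_left_comm, hscale, mul_inv_cancel_left₀ hm0]

lemma mellin_besselKernel_zero (hz : 0 < z.re) (hν : 0 < ν.re) :
    mellin (besselKernel z 0) ν = (z / 2) ^ (-ν) * Gamma ν := by
  rw [besselKernel_zero, mellin_exp_neg_mul hν (by simpa using hz)]

lemma mellinConvergent_besselKernel_of_re_pos (hz : 0 < z.re) (hν : 0 < ν.re) (m : ℝ) :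
    MellinConvergent (besselKernel z m) ν := by
  obtain rfl | hm := eq_or_ne m 0
  · rw [besselKernel_zero]
    exact mellinConvergent_exp_neg_mul hν (by simpa using hz)
  · exact mellinConvergent_besselKernel hz hm ν

lemma summable_integral_norm_besselKernel (hz : 0 < z.re) (hν : 0 < ν.re) :
    Summable fun n : ℤ => ∫ u : ℝ in Ioi 0, ‖(u : ℂ) ^ (ν - 1) • besselKernel z n u‖ := by
  refine .of_norm_bounded_eventually (((Real.summable_one_div_int_pow (p := 2)).2
    one_lt_two).mul_left (2 / z.re * ((1 / (z.re / 2)) ^ (ν.re + 1) * Real.Gamma (ν.re + 1)))) ?_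
  filter_upwards [(finite_singleton (0 : ℤ)).compl_mem_cofinite] with n hn
  have hbound := integral_norm_cpow_sub_one_smul_le (s := ν) (k := (1 : ℕ)) (half_pos hz)
    (by push_cast; positivity) fun u hu => norm_besselKernel_le hz (Int.cast_ne_zero.2 hn) 1 hu
  rw [Real.norm_of_nonneg (integral_nonneg fun _ => norm_nonneg _)]
  refine hbound.trans_eq ?_
  rw [Nat.cast_one, Nat.factorial_one, Nat.cast_one, pow_one]
  field_simp

lemma hasSum_mellin_besselKernel (hz : 0 < z.re) (hν : 0 < ν.re) :
    HasSum (fun n : ℤ => mellin (besselKernel z n) ν)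
      (mellin (fun u => ∑' n : ℤ, besselKernel z n u) ν) :=
  hasSum_mellin_of_summable_integral_norm
    (fun n => mellinConvergent_besselKernel_of_re_pos hz hν n)
    (summable_integral_norm_besselKernel hz hν)

lemma half_mul_cpow_mul_tsum_mellin_besselKernel (hz : 0 < z.re) (hν : 0 < ν.re) :
    1 / 2 * (z / 2) ^ ν * ∑' n : ℤ, mellin (besselKernel z n) ν =
      1 / 2 * Gamma ν +
        2 * ∑' n : ℕ, (((n : ℂ) + 1) * z / 2) ^ ν * besselK ν (((n : ℂ) + 1) * z) := by
  have hz2 : 0 < (z / 2).re := by simpa using hz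
  have heven : Function.Even fun n : ℤ => mellin (besselKernel z n) ν := fun n => by
    simp only [Int.cast_neg, besselKernel_neg]
  have hterm (n : ℕ) : (z / 2) ^ ν * mellin (besselKernel z ((n + 1 : ℤ) : ℝ)) ν =
      2 * ((((n : ℂ) + 1) * z / 2) ^ ν * besselK ν (((n : ℂ) + 1) * z)) := by
    have hn : 0 < ((n : ℂ) + 1).re := by
      rw [add_re, natCast_re, one_re]
      positivity
    rw [mellin_besselKernel hz (by positivity), mul_div_assoc, mul_cpow_of_re_pos hn hz2]
    push_cast
    ring
  have hzero : (z / 2) ^ ν * (z / 2) ^ (-ν) = 1 := by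
    rw [cpow_neg, mul_inv_cancel₀ (cpow_ne_zero_iff.2 (Or.inl (ne_zero_of_re_pos hz2)))]
  rw [tsum_int_eq_zero_add_two_nsmul_tsum_succ heven (hasSum_mellin_besselKernel hz hν).summable,
    Int.cast_zero, mellin_besselKernel_zero hz hν, nsmul_eq_mul, Nat.cast_ofNat, mul_add,
    mul_left_comm _ 2, mul_assoc (1 / 2) _ (∑' _, _), ← tsum_mul_left, tsum_congr hterm,
    tsum_mul_left]
  linear_combination 1 / 2 * Gamma ν * hzero

end BesselKernel

section ThetaRate

/-- The rate `z / 2 + 2 π² x² / z` of the exponential that Poisson summation puts in the place of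
the kernel `besselKernel z x`, for integers `x`. -/
noncomputable def thetaRate (z : ℂ) (x : ℝ) : ℂ :=
  z / 2 + 2 * π ^ 2 * x ^ 2 / z

variable {s z : ℂ}

lemma thetaRate_neg (z : ℂ) (x : ℝ) : thetaRate z (-x) = thetaRate z x := by
  rw [thetaRate, thetaRate, ofReal_neg, neg_sq]

lemma thetaRate_re (z : ℂ) (x : ℝ) :
    (thetaRate z x).re = z.re / 2 + 2 * π ^ 2 * z⁻¹.re * x ^ 2 := by
  have hcast : 2 * (π : ℂ) ^ 2 * (x : ℂ) ^ 2 = ((2 * π ^ 2 * x ^ 2 : ℝ) : ℂ) := by push_cast; rfl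
  rw [thetaRate, hcast, div_eq_mul_inv _ z, add_re, re_ofReal_mul, div_ofNat_re]
  ring

lemma thetaRate_re_pos (hz : 0 < z.re) (x : ℝ) : 0 < (thetaRate z x).re := by
  have := inv_re_pos hz
  rw [thetaRate_re]
  positivity

lemma thetaRate_cpow_neg (hz : 0 < z.re) (x : ℝ) (s : ℂ) :
    thetaRate z x ^ (-s) = (2 * z) ^ s * (z ^ 2 + 4 * x ^ 2 * π ^ 2) ^ (-s) := by
  have hz0 : z ≠ 0 := ne_zero_of_re_pos hz
  have h2z : 0 < (2 * z).re := by simpa using hz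
  have hmul : z ^ 2 + 4 * x ^ 2 * π ^ 2 = 2 * z * thetaRate z x := by
    rw [thetaRate]
    field_simp
    ring
  rw [hmul, mul_cpow_of_re_pos h2z (thetaRate_re_pos hz x), cpow_neg (2 * z),
    mul_inv_cancel_left₀ (cpow_ne_zero_iff.2 (Or.inl (ne_zero_of_re_pos h2z)))]

lemma tsum_besselKernel (hz : 0 < z.re) {u : ℝ} (hu : 0 < u) :
    ∑' n : ℤ, besselKernel z n u =
      (2 * π / z) ^ (1 / 2 : ℂ) *
        ((u : ℂ) ^ (1 / 2 : ℂ) * ∑' n : ℤ, exp (-(thetaRate z n * u))) := by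
  set a : ℂ := ((2 * π * u)⁻¹ : ℝ) * z with ha
  have ha_re : 0 < a.re := by rw [re_ofReal_mul]; positivity
  have hkernel (n : ℤ) :
      besselKernel z n u = exp (-(z / 2 * u)) * exp (-π * a * (n : ℂ) ^ 2) := by
    rw [besselKernel, ← exp_add, ha]
    push_cast
    congr 1
    field_simp
    ring
  have hrate (n : ℤ) :
      exp (-(thetaRate z n * u)) = exp (-(z / 2 * u)) * exp (-π / a * (n : ℂ) ^ 2) := by
    rw [thetaRate, ← exp_add, ha]
    push_cast
    congr 1
    field_simp
    ring
  have hroot : 1 / a ^ (1 / 2 : ℂ) = (2 * π / z) ^ (1 / 2 : ℂ) * (u : ℂ) ^ (1 / 2 : ℂ) := by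
    have hinv : a⁻¹ = 2 * π / z * u := by
      rw [ha]
      push_cast
      field_simp
    rw [one_div, ← inv_cpow_of_re_pos ha_re, hinv,
      mul_cpow_of_re_pos (two_pi_div_re_pos hz) (by simpa using hu)]
  simp only [hkernel, hrate, tsum_mul_left]
  rw [Complex.tsum_exp_neg_mul_int_sq ha_re, hroot]
  ring

lemma mellin_tsum_besselKernel (hz : 0 < z.re) (ν : ℂ) :
    mellin (fun u => ∑' n : ℤ, besselKernel z n u) ν =
      (2 * π / z) ^ (1 / 2 : ℂ) *
        mellin (fun u => ∑' n : ℤ, exp (-(thetaRate z n * u))) (ν + 1 / 2) := by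
  rw [← mellin_cpow_smul, ← smul_eq_mul, ← mellin_const_smul]
  refine setIntegral_congr_fun measurableSet_Ioi fun u hu => ?_
  simp only [tsum_besselKernel hz hu, smul_eq_mul]

lemma summable_integral_norm_exp_neg_thetaRate (hz : 0 < z.re) (hs : 1 / 2 < s.re) :
    Summable fun n : ℤ =>
      ∫ u : ℝ in Ioi 0, ‖(u : ℂ) ^ (s - 1) • exp (-(thetaRate z n * u))‖ := by
  set c : ℝ := 2 * π ^ 2 * z⁻¹.re
  have hc : 0 < c := by have := inv_re_pos hz; positivity
  refine .of_norm_bounded_eventually ((Real.summable_abs_int_rpow (b := 2 * s.re)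
    (by linarith)).mul_left (c ^ (-s.re) * Real.Gamma s.re)) ?_
  filter_upwards [(finite_singleton (0 : ℤ)).compl_mem_cofinite] with n hn
  have hn0 : (n : ℝ) ≠ 0 := Int.cast_ne_zero.2 hn
  have hle : c * |(n : ℝ)| ^ 2 ≤ (thetaRate z n).re := by
    rw [thetaRate_re, sq_abs]
    linarith
  have hbound := integral_norm_cpow_sub_one_smul_le (s := s) (k := 0) (C := 1)
    (f := fun u : ℝ => exp (-(thetaRate z n * u))) (c := c * |(n : ℝ)| ^ 2) (by positivity)
    (by linarith) fun u hu => by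
      rw [norm_exp_neg_mul_ofReal, Real.rpow_zero, one_mul, one_mul]
      gcongr
  rw [Real.norm_of_nonneg (integral_nonneg fun _ => norm_nonneg _)]
  refine hbound.trans_eq ?_
  rw [add_zero, one_mul, one_div, Real.inv_rpow (by positivity), ← Real.rpow_neg (by positivity),
    Real.mul_rpow hc.le (by positivity), ← Real.rpow_natCast_mul (abs_nonneg _), Nat.cast_ofNat,
    mul_neg]
  ring

lemma hasSum_mellin_exp_neg_thetaRate (hz : 0 < z.re) (hs : 1 / 2 < s.re) :
    HasSum (fun n : ℤ => mellin (fun u : ℝ => exp (-(thetaRate z n * u))) s)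
      (mellin (fun u => ∑' n : ℤ, exp (-(thetaRate z n * u))) s) :=
  hasSum_mellin_of_summable_integral_norm
    (fun n => mellinConvergent_exp_neg_mul (by linarith) (thetaRate_re_pos hz n))
    (summable_integral_norm_exp_neg_thetaRate hz hs)

lemma tsum_mellin_exp_neg_thetaRate (hz : 0 < z.re) (hs : 1 / 2 < s.re) :
    ∑' n : ℤ, mellin (fun u : ℝ => exp (-(thetaRate z n * u))) s =
      (2 * z) ^ s * Gamma s *
        (z ^ (-(2 * s)) + 2 * ∑' n : ℕ, (z ^ 2 + 4 * ((n : ℂ) + 1) ^ 2 * π ^ 2) ^ (-s)) := by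
  have heven : Function.Even fun n : ℤ => mellin (fun u : ℝ => exp (-(thetaRate z n * u))) s :=
    fun n => by simp only [Int.cast_neg, thetaRate_neg]
  have hterm (n : ℤ) : mellin (fun u : ℝ => exp (-(thetaRate z n * u))) s =
      (2 * z) ^ s * Gamma s * (z ^ 2 + 4 * (n : ℂ) ^ 2 * π ^ 2) ^ (-s) := by
    rw [mellin_exp_neg_mul (by linarith) (thetaRate_re_pos hz n), thetaRate_cpow_neg hz,
      ofReal_intCast]
    ring
  rw [tsum_int_eq_zero_add_two_nsmul_tsum_succ heven
    (hasSum_mellin_exp_neg_thetaRate hz hs).summable]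
  simp only [hterm, tsum_mul_left, nsmul_eq_mul]
  have hzero : (z ^ 2 + 4 * ((0 : ℤ) : ℂ) ^ 2 * π ^ 2) ^ (-s) = z ^ (-(2 * s)) := by
    rw [← mul_neg, ← sq_cpow_of_re_pos hz]
    simp
  rw [hzero]
  push_cast
  ring

end ThetaRate

lemma half_mul_cpow_mul_cpow_mul_cpow {z : ℂ} (hz : 0 < z.re) (ν : ℂ) :
    1 / 2 * (z / 2) ^ ν * (2 * π / z) ^ (1 / 2 : ℂ) * (2 * z) ^ (ν + 1 / 2) =
      Gamma (1 / 2) * z ^ (2 * ν) := by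
  have hz0 : z ≠ 0 := ne_zero_of_re_pos hz
  have hz2 : 0 < (z / 2).re := by simpa using hz
  have h2z : 0 < (2 * z).re := by simpa using hz
  have hpow : (z / 2) ^ ν * (2 * z) ^ ν = z ^ (2 * ν) := by
    rw [← mul_cpow_of_re_pos hz2 h2z, ← sq_cpow_of_re_pos hz]
    congr 1
    ring
  have hsqrt : (2 * π / z) ^ (1 / 2 : ℂ) * (2 * z) ^ (1 / 2 : ℂ) = 2 * Gamma (1 / 2) := by
    have hpi : 0 < (π : ℂ).re := Real.pi_pos
    have hprod : 2 * π / z * (2 * z) = 2 ^ 2 * π := by field_simp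
    rw [← mul_cpow_of_re_pos (two_pi_div_re_pos hz) h2z, hprod,
      mul_cpow_of_re_pos (by norm_num) hpi, sq_cpow_of_re_pos (by norm_num), Gamma_one_half_eq,
      mul_one_div_cancel two_ne_zero, cpow_one]
  rw [cpow_add _ _ (ne_zero_of_re_pos h2z)]
  linear_combination 1 / 2 * (2 * π / z) ^ (1 / 2 : ℂ) * (2 * z) ^ (1 / 2 : ℂ) * hpow +
    1 / 2 * z ^ (2 * ν) * hsqrt

theorem stmt14_general (ν z : ℂ) (hν : 0 < ν.re) (hz : 0 < z.re) :
    1 / 2 * Gamma ν +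
      2 * ∑' n : ℕ, (((n : ℂ) + 1) * z / 2) ^ ν * besselK ν (((n : ℂ) + 1) * z)
      = Gamma (1 / 2) * Gamma (ν + 1 / 2) * z ^ (2 * ν) *
        (z ^ (-(2 * ν + 1)) +
          2 * ∑' n : ℕ, (z ^ 2 + 4 * ((n : ℂ) + 1) ^ 2 * (π : ℂ) ^ 2) ^ (-(ν + 1 / 2))) := by
  have hs : 1 / 2 < (ν + 1 / 2).re := by simpa using hν
  have htheta : ∑' n : ℤ, mellin (besselKernel z n) ν = (2 * π / z) ^ (1 / 2 : ℂ) *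
      ∑' n : ℤ, mellin (fun u : ℝ => exp (-(thetaRate z n * u))) (ν + 1 / 2) := by
    rw [(hasSum_mellin_besselKernel hz hν).tsum_eq, mellin_tsum_besselKernel hz,
      (hasSum_mellin_exp_neg_thetaRate hz hs).tsum_eq]
  have hexponent : 2 * (ν + 1 / 2) = 2 * ν + 1 := by ring
  rw [← half_mul_cpow_mul_tsum_mellin_besselKernel hz hν, htheta,
    tsum_mellin_exp_neg_thetaRate hz hs, hexponent, mul_right_comm (Gamma (1 / 2)),
    ← half_mul_cpow_mul_cpow_mul_cpow hz]
  ring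

end

theorem stmt14 (ν z : ℂ) (hν : 1/2 < ν.re) (hz : 0 < z.re) :
    1/2 * Complex.Gamma ν +
      2 * ∑' n : ℕ, (((n : ℂ) + 1) * z / 2) ^ ν * besselK ν (((n : ℂ) + 1) * z)
      = Complex.Gamma (1/2) * Complex.Gamma (ν + 1/2) * z ^ (2 * ν) *
        (z ^ (-(2 * ν + 1)) +
          2 * ∑' n : ℕ, (z^2 + 4 * ((n : ℂ) + 1)^2 * (π : ℂ)^2) ^ (-(ν + 1/2))) :=
  stmt14_general ν z (by linarith) hz
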